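/- If there exists an uncountable set F of entire functions (functions ℂ → ℂ analytic on all of ℂ) such that for every point z ∈ ℂ the set of values {f(z) : f ∈ F} is countable, then the Continuum Hypothesis 2^ℵ₀ = ℵ₁ holds. -/

import Mathlib

open Cardinal

/-- Two distinct entire functions agree on at most countably many points. -/
theorem Differentiable.countable_setOf_eq {f g : ℂ → ℂ} (hf : Differentiable ℂ f)
    (hg : Differentiable ℂ g) (hne : f ≠ g) : {z | f z = g z}.Countable := by
  have hiso : ∀ z ∈ {z | f z = g z}, ({z} : Set ℂ) ∈ nhdsWithin z {z | f z = g z} := by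
    intro z _
    have hfreq : ¬ ∃ᶠ w in nhdsWithin z {z}ᶜ, f w = g w := fun hfr =>
      hne (AnalyticOnNhd.eq_of_frequently_eq (fun w _ => hf.analyticAt w)
        (fun w _ => hg.analyticAt w) hfr)
    rw [Filter.not_frequently, eventually_nhdsWithin_iff] at hfreq
    rw [mem_nhdsWithin_iff_eventually]
    filter_upwards [hfreq] with w hw hwS
    by_contra hwz
    exact hw hwz hwS
  obtain ⟨t, -, htc, hcover⟩ := TopologicalSpace.countable_cover_nhdsWithin hiso
  exact htc.mono (by simpa using hcover)

/-- If `ℵ₁ < 𝔠`, then any `ℵ₁` entire functions take pairwise distinct values at some point. -/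
theorem exists_injOn_eval_of_mk_eq_aleph_one {G : Set (ℂ → ℂ)}
    (hG : ∀ f ∈ G, Differentiable ℂ f) (hcard : #G = ℵ₁) (hlt : (ℵ₁ : Cardinal.{0}) < 𝔠) :
    ∃ z : ℂ, Set.InjOn (fun f : ℂ → ℂ => f z) G := by
  let agree : {p : G × G // p.1 ≠ p.2} → Set ℂ := fun p => {z | p.1.1.1 z = p.1.2.1 z}
  have hagree : ∀ p, #(agree p) ≤ ℵ₀ := fun p =>
    (Differentiable.countable_setOf_eq (hG _ p.1.1.2) (hG _ p.1.2.2)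
      (fun h => p.2 (Subtype.ext h))).le_aleph0
  have hunion : #(⋃ p, agree p) < #(Set.univ : Set ℂ) := by
    rw [mk_univ_complex]
    refine lt_of_le_of_lt ?_ hlt
    calc #(⋃ p, agree p) ≤ #{p : G × G // p.1 ≠ p.2} * ⨆ p, #(agree p) := mk_iUnion_le _
      _ ≤ ℵ₁ * ℵ₀ := by
        refine mul_le_mul' ((mk_subtype_le _).trans ?_) (ciSup_le' hagree)
        rw [mk_prod, lift_id, hcard, mul_eq_self (aleph0_le_aleph 1)]
      _ ≤ ℵ₁ := by rw [mul_eq_left (aleph0_le_aleph 1) (aleph0_le_aleph 1) aleph0_ne_zero]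
  obtain ⟨z, hz⟩ : ∃ z, z ∉ ⋃ p, agree p := by
    by_contra! hall
    rw [Set.eq_univ_of_forall hall] at hunion
    exact hunion.false
  refine ⟨z, fun f hf g hg hfg => ?_⟩
  by_contra hne
  exact hz (Set.mem_iUnion.2 ⟨⟨(⟨f, hf⟩, ⟨g, hg⟩), fun h => hne (congrArg Subtype.val h)⟩, hfg⟩)

/-- Dixon's direction of Wetzel's problem: if there is an uncountable family of
entire functions whose set of values at each point of `ℂ` is countable, then
the Continuum Hypothesis holds. -/
theorem CH_of_exists_uncountable_family
    (h : ∃ F : Set (ℂ → ℂ),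
      (∀ f ∈ F, Differentiable ℂ f) ∧
      ¬ F.Countable ∧
      ∀ z : ℂ, ((fun f : ℂ → ℂ => f z) '' F).Countable) :
    (2 : Cardinal) ^ Cardinal.aleph0 = Cardinal.aleph 1 := by
  obtain ⟨F, hF, hunc, hval⟩ := h
  have hCH : (𝔠 : Cardinal.{0}) = ℵ₁ := by
    refine le_antisymm (not_lt.1 fun hlt => ?_) aleph_one_le_continuum
    rw [← le_aleph0_iff_set_countable, not_le, ← aleph_one_le_iff] at hunc
    obtain ⟨G, hGF, hG⟩ := le_mk_iff_exists_subset.1 hunc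
    obtain ⟨z, hz⟩ := exists_injOn_eval_of_mk_eq_aleph_one (fun f hf => hF f (hGF hf)) hG hlt
    have hGc : G.Countable :=
      Set.countable_of_injective_of_countable_image hz ((hval z).mono (Set.image_mono hGF))
    rw [← le_aleph0_iff_set_countable, hG] at hGc
    exact hGc.not_gt aleph0_lt_aleph_one
  rw [two_power_aleph0, ← lift_continuum.{_, 0}, hCH, lift_aleph, Ordinal.lift_one]
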